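/- arXiv:1502.01774 — 2 statements merged into one kernel-verified Lean document; each statement's English description precedes it below -/
import Mathlib

section
/- For pseudo-differential operators A = Σ_{k≤m₁} f_k ∂^k and B = Σ_{j≤m₂} g_j ∂^j with the product defined by AB = Σ_k Σ_j Σ_{l≥0} C(k,l) f_k (∂^l g_j/∂x^l) ∂^{k+j-l}, where C(k,l) = k(k-1)⋯(k-l+1)/l!, the residue of the commutator [A,B] is a total x-derivative of a differential polynomial in the coefficients of A and B. -/
/-- Generalized binomial coefficient `C(k,l) = k(k-1)⋯(k-l+1)/l!` for `k : ℤ`. -/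
noncomputable def genBinom (k : ℤ) (l : ℕ) : ℚ :=
  (∏ i ∈ Finset.range l, ((k : ℚ) - (i : ℚ))) / (Nat.factorial l : ℚ)

/-- Product of pseudo-differential operators, given by coefficient sequences
`A, B : ℤ → R` over a differential ring `(R, d)`:
`(AB)_m = Σ_k Σ_l C(k,l) A_k d^l B_{m-k+l}`. -/
noncomputable def pdoMul {R : Type*} [CommRing R] [Algebra ℚ R] (d : R → R)
    (A B : ℤ → R) : ℤ → R :=
  fun m => ∑ᶠ (k : ℤ) (l : ℕ), genBinom k l • (A k * d^[l] (B (m - k + l)))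

/-- The residue of a pseudo-differential operator: the coefficient of `∂^{-1}`. -/
def pdoRes {R : Type*} (A : ℤ → R) : R := A (-1)

/-!
The commutator of `f ∂ᵏ` and `g ∂ʲ` has a nonzero residue only if `l = k + j + 1` is a natural
number, and then the residue is `C(k,l) f g⁽ˡ⁾ - C(j,l) g f⁽ˡ⁾`. Since `j = -1 - k + l`, reflecting
the factors of the binomial coefficient gives `C(j,l) = (-1)ˡ C(k,l)`, so the residue is a multiple
of `f g⁽ˡ⁾ - (-1)ˡ g f⁽ˡ⁾`, which `l` integrations by parts exhibit as a total derivative.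
-/

section TotalDerivatives

variable {K R : Type*} [CommSemiring K] [CommSemiring R] [Algebra K R] (d : Derivation K R R)

theorem derivation_mapsTo_adjoin {s : Set R} (hs : Set.MapsTo d s (Algebra.adjoin K s)) :
    Set.MapsTo d (Algebra.adjoin K s) (Algebra.adjoin K s) := by
  intro x hx
  refine Algebra.adjoin_induction (fun _ hy ↦ hs hy) (fun c ↦ ?_)
    (fun y z _ _ hy hz ↦ ?_) (fun y z hy_mem hz_mem hy hz ↦ ?_) hx
  · simp only [Derivation.map_algebraMap, SetLike.mem_coe, zero_mem]
  · simpa only [map_add, SetLike.mem_coe] using add_mem hy hz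
  · simpa only [Derivation.leibniz, smul_eq_mul, SetLike.mem_coe] using
      add_mem (mul_mem hy_mem hz) (mul_mem hz_mem hy)

/-- The `K`-submodule of derivatives `d h` of elements `h` of the subalgebra `S`. When `S` is an
algebra of differential polynomials and `d = d/dx`, these are the total `x`-derivatives. -/
def totalDerivatives (S : Subalgebra K R) : Submodule K R :=
  (Subalgebra.toSubmodule S).map (d : R →ₗ[K] R)

variable {d}

theorem mem_totalDerivatives {S : Subalgebra K R} {x : R} :
    x ∈ totalDerivatives d S ↔ ∃ h ∈ S, d h = x :=
  Iff.rfl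

end TotalDerivatives

theorem mul_iterate_sub_mem_totalDerivatives {K R : Type*} [CommRing K] [CommRing R] [Algebra K R]
    {d : Derivation K R R} {S : Subalgebra K R} (hS : Set.MapsTo d S S) {a b : R}
    (ha : a ∈ S) (hb : b ∈ S) (l : ℕ) :
    a * d^[l] b - (-1) ^ l * (b * d^[l] a) ∈ totalDerivatives d S := by
  induction l generalizing a with
  | zero =>
    simp only [Function.iterate_zero, id_eq, pow_zero, one_mul, mul_comm a b, sub_self, zero_mem]
  | succ l ih =>
    have boundary : d (a * d^[l] b) ∈ totalDerivatives d S :=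
      mem_totalDerivatives.2 ⟨_, mul_mem ha (hS.iterate l hb), rfl⟩
    have by_parts : a * d^[l + 1] b - (-1) ^ (l + 1) * (b * d^[l + 1] a) =
        d (a * d^[l] b) - (d a * d^[l] b - (-1) ^ l * (b * d^[l] (d a))) := by
      rw [Function.iterate_succ_apply' d l b, Function.iterate_succ_apply d l a,
        Derivation.leibniz, smul_eq_mul, smul_eq_mul]
      ring
    exact by_parts ▸ sub_mem boundary (ih (hS ha))

theorem genBinom_eq_descPochhammer_eval_div (k : ℤ) (l : ℕ) :
    genBinom k l = (descPochhammer ℚ l).eval (k : ℚ) / l.factorial := by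
  rw [genBinom, descPochhammer_eval_eq_prod_range]

theorem genBinom_neg_one_sub_add (k : ℤ) (l : ℕ) :
    genBinom (-1 - k + l) l = (-1) ^ l * genBinom k l := by
  have reflect : ((-1 - k + l : ℤ) : ℚ) - l + 1 = -k := by
    push_cast
    ring
  rw [genBinom_eq_descPochhammer_eval_div, genBinom_eq_descPochhammer_eval_div,
    descPochhammer_eval_eq_ascPochhammer, reflect, ascPochhammer_eval_neg_eq_descPochhammer,
    mul_div_assoc]

section Product

variable {R : Type*} [CommRing R] [Algebra ℚ R]

/-- The contribution of `∂ᵏ` in `A` and of the `l`-th term of the Leibniz rule to the coefficient of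
`∂ᵐ` in `A B`, as a function of the pair `(k, l)`. -/
noncomputable def pdoMulTerm (d : R → R) (A B : ℤ → R) (m : ℤ) (p : ℤ × ℕ) : R :=
  genBinom p.1 p.2 • (A p.1 * d^[p.2] (B (m - p.1 + p.2)))

theorem hasFiniteSupport_pdoMulTerm {d : R → R} (hd : d 0 = 0) {A B : ℤ → R} {m₁ m₂ : ℤ}
    (hA : ∀ k, m₁ < k → A k = 0) (hB : ∀ k, m₂ < k → B k = 0) (m : ℤ) :
    (pdoMulTerm d A B m).HasFiniteSupport := by
  refine ((Set.finite_Icc (m - m₂) m₁).prod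
    (Set.finite_Iic (m₁ + m₂ - m).toNat)).subset fun ⟨k, l⟩ hkl ↦ ?_
  have hk : k ≤ m₁ := by
    by_contra! hlt
    exact hkl (by simp only [pdoMulTerm, hA k hlt, zero_mul, smul_zero])
  have hl : m - k + l ≤ m₂ := by
    by_contra! hlt
    exact hkl (by
      simp only [pdoMulTerm, hB _ hlt, Function.iterate_fixed hd, mul_zero, smul_zero])
  simp only [Set.mem_prod, Set.mem_Icc, Set.mem_Iic]
  omega

theorem pdoMul_apply_eq_finsum {d : R → R} {A B : ℤ → R} {m : ℤ}
    (h : (pdoMulTerm d A B m).HasFiniteSupport) :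
    pdoMul d A B m = ∑ᶠ p, pdoMulTerm d A B m p :=
  (finsum_curry _ h).symm

end Product

section Residue

/-- The involution `(k, l) ↦ (j, l)` with `k + j + 1 = l`, matching the terms of `res (A B)` with
those of `res (B A)`. -/
def residueSwap : Equiv.Perm (ℤ × ℕ) :=
  Function.Involutive.toPerm (fun p ↦ (-1 - p.1 + p.2, p.2)) fun p ↦ by
    ext <;> simp only
    ring

variable {R : Type*} [CommRing R] [Algebra ℚ R] {A B : ℤ → R}

theorem pdoMulTerm_residueSwap (d : R → R) (k : ℤ) (l : ℕ) :
    pdoMulTerm d B A (-1) (residueSwap (k, l)) =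
      genBinom k l • ((-1) ^ l * (B (-1 - k + l) * d^[l] (A k))) := by
  have hswap : residueSwap (k, l) = (-1 - k + l, l) := rfl
  have hk : -1 - (-1 - k + l) + (l : ℤ) = k := by ring
  rw [pdoMulTerm, hswap, hk, genBinom_neg_one_sub_add, mul_comm, mul_smul,
    Algebra.smul_def ((-1 : ℚ) ^ l), map_pow, map_neg, map_one]

theorem pdoRes_pdoMul_sub_eq_finsum {d : R → R}
    (hAB : (pdoMulTerm d A B (-1)).HasFiniteSupport)
    (hBA : (pdoMulTerm d B A (-1)).HasFiniteSupport) :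
    pdoRes (pdoMul d A B) - pdoRes (pdoMul d B A) =
      ∑ᶠ p, (pdoMulTerm d A B (-1) p - pdoMulTerm d B A (-1) (residueSwap p)) := by
  have hBA_swap : (fun p ↦ pdoMulTerm d B A (-1) (residueSwap p)).HasFiniteSupport :=
    hBA.preimage residueSwap.injective.injOn
  rw [finsum_sub_distrib hAB hBA_swap, finsum_comp_equiv residueSwap, pdoRes, pdoRes,
    pdoMul_apply_eq_finsum hAB, pdoMul_apply_eq_finsum hBA]

variable {d : Derivation ℚ R R} {S : Subalgebra ℚ R}

theorem pdoMulTerm_sub_residueSwap_mem_totalDerivatives (hS : Set.MapsTo d S S)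
    (hA : ∀ k, A k ∈ S) (hB : ∀ k, B k ∈ S) (p : ℤ × ℕ) :
    pdoMulTerm d A B (-1) p - pdoMulTerm d B A (-1) (residueSwap p) ∈ totalDerivatives d S := by
  obtain ⟨k, l⟩ := p
  rw [pdoMulTerm_residueSwap, pdoMulTerm, ← smul_sub]
  exact Submodule.smul_mem _ _ (mul_iterate_sub_mem_totalDerivatives hS (hA k) (hB _) l)

theorem pdoRes_pdoMul_sub_mem_totalDerivatives (hS : Set.MapsTo d S S)
    (hAS : ∀ k, A k ∈ S) (hBS : ∀ k, B k ∈ S) {m₁ m₂ : ℤ}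
    (hA : ∀ k, m₁ < k → A k = 0) (hB : ∀ k, m₂ < k → B k = 0) :
    pdoRes (pdoMul d A B) - pdoRes (pdoMul d B A) ∈ totalDerivatives d S := by
  rw [pdoRes_pdoMul_sub_eq_finsum (hasFiniteSupport_pdoMulTerm (map_zero d) hA hB _)
    (hasFiniteSupport_pdoMulTerm (map_zero d) hB hA _)]
  exact finsum_induction (· ∈ totalDerivatives d S) (zero_mem _) (fun _ _ ↦ add_mem)
    (pdoMulTerm_sub_residueSwap_mem_totalDerivatives hS hAS hBS)

end Residue

/-- for pseudo-differential operators `A = Σ_{k≤m₁} f_k ∂^k`,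
`B = Σ_{j≤m₂} g_j ∂^j`, the residue of the commutator `[A,B]` is a total
`x`-derivative of a differential polynomial in the coefficients of `A` and `B`. -/
theorem residue_commutator_is_total_derivative
    {R : Type*} [CommRing R] [Algebra ℚ R] (d : Derivation ℚ R R)
    (A B : ℤ → R) (m₁ m₂ : ℤ)
    (hA : ∀ k : ℤ, m₁ < k → A k = 0) (hB : ∀ k : ℤ, m₂ < k → B k = 0) :
    ∃ h ∈ Algebra.adjoin ℚ
        {x : R | ∃ (m : ℕ) (k : ℤ), x = (⇑d)^[m] (A k) ∨ x = (⇑d)^[m] (B k)},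
      pdoRes (pdoMul (⇑d) A B) - pdoRes (pdoMul (⇑d) B A) = d h := by
  set generators := {x : R | ∃ (m : ℕ) (k : ℤ), x = d^[m] (A k) ∨ x = d^[m] (B k)}
  have mapsTo_generators : Set.MapsTo d generators generators := by
    rintro _ ⟨m, k, rfl | rfl⟩
    · exact ⟨m + 1, k, Or.inl (Function.iterate_succ_apply' d m (A k)).symm⟩
    · exact ⟨m + 1, k, Or.inr (Function.iterate_succ_apply' d m (B k)).symm⟩
  have mapsTo_polynomials :=
    derivation_mapsTo_adjoin d (mapsTo_generators.mono_right (Algebra.subset_adjoin (R := ℚ)))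
  obtain ⟨h, hh, heq⟩ := mem_totalDerivatives.1 <|
    pdoRes_pdoMul_sub_mem_totalDerivatives mapsTo_polynomials
      (fun k ↦ Algebra.subset_adjoin ⟨0, k, Or.inl rfl⟩)
      (fun k ↦ Algebra.subset_adjoin ⟨0, k, Or.inr rfl⟩) hA hB
  exact ⟨h, hh, heq.symm⟩
end

section
/- Let r₁,…,r_{n+2} be the (assumed simple, pairwise distinct) critical points of λ(p) = p^{n+1} + v_n p^{n-1} + ⋯ + v₁ + u/(p-w), u ≠ 0. Given the data f^i = λ''(r_i), P^{ki}_a, Q^{ii}_a as in the paper, the quantity c_i = 1/(3(f^i)²) [ Q^{ii}_2 - λ(r_i) Q^{ii}_1 + Σ_{k≠i} (P^{ki}_2 - λ(r_i) P^{ki}_1)²/(f^k (λ(r_k) - λ(r_i))) ] equals 1/24 for every i, provided the residue-sum identities Σ_{k≠i} (λ(r_k)-λ(r_i))/(λ''(r_k)(r_k-r_i)²) = (1-n)/(2(n+1)) and the analogous identities for the weights 1/(r_k-w)² and 1/(r_k-w)⁴ hold. -/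
open Finset

/-- `λ(p) = p^{n+1} + v_n p^{n-1} + ⋯ + v₂ p + v₁ + u/(p-w)`. -/
noncomputable def lam (n : ℕ) (v : ℕ → ℂ) (u w : ℂ) : ℂ → ℂ :=
  fun p => p ^ (n + 1) + (∑ i ∈ Finset.range n, v (i + 1) * p ^ i) + u / (p - w)

/-- `λ₊(p)`: the polynomial part of `λ`. -/
noncomputable def lamPlus (n : ℕ) (v : ℕ → ℂ) : ℂ → ℂ :=
  fun p => p ^ (n + 1) + ∑ i ∈ Finset.range n, v (i + 1) * p ^ i

/-- `P₁^{ki}` evaluated at a pair of critical points `rk, ri`. -/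
noncomputable def Pone (n : ℕ) (v : ℕ → ℂ) (u w rk ri : ℂ) : ℂ :=
  (iteratedDeriv 2 (lam n v u w) rk + iteratedDeriv 2 (lam n v u w) ri) / (2 * (rk - ri))
    - (rk - ri) * (rk + ri - 2 * w) * u / ((rk - w) ^ 3 * (ri - w) ^ 3)

/-- `P₂^{ki}` evaluated at a pair of critical points `rk, ri`. -/
noncomputable def Ptwo (n : ℕ) (v : ℕ → ℂ) (u w rk ri : ℂ) : ℂ :=
  (iteratedDeriv 2 (lam n v u w) rk * lam n v u w ri
      + lam n v u w rk * iteratedDeriv 2 (lam n v u w) ri) / (2 * (rk - ri))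
    - (rk + ri - 2 * w) * (lam n v u w rk * (rk - w) - lam n v u w ri * (ri - w)) * u /
        ((rk - w) ^ 3 * (ri - w) ^ 3)

/-- `Q₁^{ii}` evaluated at a critical point `ri`. -/
noncomputable def Qone (n : ℕ) (v : ℕ → ℂ) (u w ri : ℂ) : ℂ :=
  iteratedDeriv 4 (lam n v u w) ri / 12 - 2 * u / (ri - w) ^ 5

/-- `Q₂^{ii}` evaluated at a critical point `ri`. -/
noncomputable def Qtwo (n : ℕ) (v : ℕ → ℂ) (u w ri : ℂ) : ℂ :=
  iteratedDeriv 4 (lam n v u w) ri * lam n v u w ri / 12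
    + (n : ℂ) * (iteratedDeriv 2 (lam n v u w) ri) ^ 2 / (4 * ((n : ℂ) + 1))
    - ((n : ℂ) + 2) * u ^ 2 / (((n : ℂ) + 1) * (ri - w) ^ 6)
    - (n : ℂ) * u * iteratedDeriv 2 (lam n v u w) ri / (((n : ℂ) + 1) * (ri - w) ^ 3)
    - 2 * u * deriv (lamPlus n v) w / (ri - w) ^ 4
    - 2 * u * lamPlus n v w / (ri - w) ^ 5

/-!
Split `λ = λ₊ + u/(p-w)` and write `b = r_i - w`, so that `λ''(r_i) = λ₊''(r_i) + 2u/b³`.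
The difference `P₂^{ki} - λ(r_i) P₁^{ki}` factors as `λ(r_k) - λ(r_i)` over `r_k - r_i` times
`λ₊''(r_i)/2 + (u/b)/(r_k-w)²`. Squaring it turns the sum over `k` into a combination of the
residue sums with weights `1`, `1/(r_k-w)²` and `1/(r_k-w)⁴`. The values of `λ₊` and `λ₊'` at `w`
then cancel against those in `Q₂^{ii} - λ(r_i) Q₁^{ii}`, and what remains is the perfect square
`(λ₊''(r_i)/2 + u/b³)²/2 = λ''(r_i)²/8`.
-/

theorem iteratedDeriv_const_div_sub {𝕜 : Type*} [NontriviallyNormedField 𝕜] (m : ℕ) (u w p : 𝕜) :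
    iteratedDeriv m (fun q => u / (q - w)) p
      = (-1) ^ m * (m.factorial : 𝕜) * u / (p - w) ^ (m + 1) := by
  have hinv := iter_deriv_inv_linear_sub m 1 w
  have hexp : (-1 - m : ℤ) = -((m + 1 : ℕ) : ℤ) := by push_cast; ring
  simp only [one_mul, one_pow, mul_one, hexp, zpow_neg, zpow_natCast] at hinv
  simp only [div_eq_mul_inv, iteratedDeriv_const_mul_field, iteratedDeriv_eq_iterate, hinv]
  ring

section

variable (n : ℕ) (v : ℕ → ℂ)

theorem contDiff_lamPlus {m : WithTop ℕ∞} : ContDiff ℂ m (lamPlus n v) := by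
  unfold lamPlus
  fun_prop

variable (u : ℂ) {w : ℂ}

theorem iteratedDeriv_two_lam {p : ℂ} (hp : p ≠ w) :
    iteratedDeriv 2 (lam n v u w) p = iteratedDeriv 2 (lamPlus n v) p + 2 * u / (p - w) ^ 3 := by
  have hpolar : ContDiffAt ℂ 2 (fun q => u / (q - w)) p :=
    contDiffAt_const.div (by fun_prop) (sub_ne_zero.mpr hp)
  have hsplit : lam n v u w = lamPlus n v + fun q => u / (q - w) := rfl
  rw [hsplit, iteratedDeriv_add (contDiff_lamPlus n v).contDiffAt hpolar,
    iteratedDeriv_const_div_sub]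
  norm_num [Nat.factorial]

theorem Ptwo_sub_lam_mul_Pone {rk ri : ℂ} (hr : rk ≠ ri) (hk : rk ≠ w) (hi : ri ≠ w) :
    Ptwo n v u w rk ri - lam n v u w ri * Pone n v u w rk ri
      = (lam n v u w rk - lam n v u w ri) / (rk - ri) *
        (iteratedDeriv 2 (lamPlus n v) ri / 2 + u / ((ri - w) * (rk - w) ^ 2)) := by
  have hd : rk - ri ≠ 0 := sub_ne_zero.mpr hr
  have ha : rk - w ≠ 0 := sub_ne_zero.mpr hk
  have hb : ri - w ≠ 0 := sub_ne_zero.mpr hi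
  rw [Ptwo, Pone, iteratedDeriv_two_lam n v u hi]
  field_simp
  ring

theorem Qtwo_sub_lam_mul_Qone {ri : ℂ} (hi : ri ≠ w) :
    Qtwo n v u w ri - lam n v u w ri * Qone n v u w ri
      = n / (4 * (n + 1)) * iteratedDeriv 2 (lamPlus n v) ri ^ 2
        - 2 * u ^ 2 / (ri - w) ^ 6
        - 2 * u * deriv (lamPlus n v) w / (ri - w) ^ 4
        - 2 * u * (lamPlus n v w - lam n v u w ri) / (ri - w) ^ 5 := by
  have hb : ri - w ≠ 0 := sub_ne_zero.mpr hi
  have hn : (n : ℂ) + 1 ≠ 0 := Nat.cast_add_one_ne_zero n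
  rw [Qtwo, Qone, iteratedDeriv_two_lam n v u hi]
  field_simp
  ring

variable (w) in
/-- The residue at a simple critical point `rk ≠ ri, w` of
`(λ(p) - λ(ri)) / (λ'(p) (p - ri)² (p - w)^m)`, written out as the summand with weight
`1/(rk - w)^m` of the residue-sum identities. -/
noncomputable def lamResidue (m : ℕ) (rk ri : ℂ) : ℂ :=
  (lam n v u w rk - lam n v u w ri) /
    (iteratedDeriv 2 (lam n v u w) rk * (rk - ri) ^ 2 * (rk - w) ^ m)

theorem sq_Ptwo_sub_lam_mul_Pone_div {rk ri : ℂ} (hr : rk ≠ ri) (hk : rk ≠ w) (hi : ri ≠ w) :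
    (Ptwo n v u w rk ri - lam n v u w ri * Pone n v u w rk ri) ^ 2 /
        (iteratedDeriv 2 (lam n v u w) rk * (lam n v u w rk - lam n v u w ri))
      = (iteratedDeriv 2 (lamPlus n v) ri / 2) ^ 2 * lamResidue n v u w 0 rk ri
        + iteratedDeriv 2 (lamPlus n v) ri * (u / (ri - w)) * lamResidue n v u w 2 rk ri
        + (u / (ri - w)) ^ 2 * lamResidue n v u w 4 rk ri := by
  have hd : rk - ri ≠ 0 := sub_ne_zero.mpr hr
  have ha : rk - w ≠ 0 := sub_ne_zero.mpr hk
  have hb : ri - w ≠ 0 := sub_ne_zero.mpr hi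
  rw [Ptwo_sub_lam_mul_Pone n v u hr hk hi]
  unfold lamResidue
  field_simp
  ring

theorem sum_sq_Ptwo_sub_lam_mul_Pone_div {ι : Type*} (s : Finset ι) (r : ι → ℂ) {ri : ℂ}
    (hr : ∀ k ∈ s, r k ≠ ri) (hw : ∀ k ∈ s, r k ≠ w) (hi : ri ≠ w) :
    ∑ k ∈ s, (Ptwo n v u w (r k) ri - lam n v u w ri * Pone n v u w (r k) ri) ^ 2 /
        (iteratedDeriv 2 (lam n v u w) (r k) * (lam n v u w (r k) - lam n v u w ri))
      = (iteratedDeriv 2 (lamPlus n v) ri / 2) ^ 2 * ∑ k ∈ s, lamResidue n v u w 0 (r k) ri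
        + iteratedDeriv 2 (lamPlus n v) ri * (u / (ri - w)) *
          ∑ k ∈ s, lamResidue n v u w 2 (r k) ri
        + (u / (ri - w)) ^ 2 * ∑ k ∈ s, lamResidue n v u w 4 (r k) ri := by
  simp only [mul_sum, ← sum_add_distrib]
  exact sum_congr rfl fun k hk => sq_Ptwo_sub_lam_mul_Pone_div n v u (hr k hk) (hw k hk) hi

end

/-- the central invariants of the bihamiltonian structure of the
constrained KP hierarchy equal `1/24`: with `f^i = λ''(r_i)` and the data
`P^{ki}_a`, `Q^{ii}_a` as in the paper, and given the residue-sum identities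
for the weights `1`, `1/(r_k-w)²`, `1/(r_k-w)⁴`, one has
`c_i = (1/(3 (f^i)²)) [Q^{ii}_2 - λ(r_i) Q^{ii}_1 + Σ_{k≠i} (P^{ki}_2 - λ(r_i)P^{ki}_1)²/(f^k (λ(r_k)-λ(r_i)))] = 1/24`. -/
theorem central_invariants_eq_one_twentyfourth
    (n : ℕ) (v : ℕ → ℂ) (u w : ℂ) (hu : u ≠ 0)
    (r : Fin (n + 2) → ℂ) (hinj : Function.Injective r)
    (hw : ∀ k, r k ≠ w)
    (hcrit : ∀ k, deriv (lam n v u w) (r k) = 0)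
    (hsimple : ∀ k, iteratedDeriv 2 (lam n v u w) (r k) ≠ 0)
    (i : Fin (n + 2))
    (hval : ∀ k, k ≠ i → lam n v u w (r k) ≠ lam n v u w (r i))
    (H1 : ∑ k ∈ Finset.univ.erase i,
        (lam n v u w (r k) - lam n v u w (r i)) /
          (iteratedDeriv 2 (lam n v u w) (r k) * (r k - r i) ^ 2)
      = ((1 : ℂ) - (n : ℂ)) / (2 * ((n : ℂ) + 1)))
    (H2 : ∑ k ∈ Finset.univ.erase i,
        (lam n v u w (r k) - lam n v u w (r i)) /
          (iteratedDeriv 2 (lam n v u w) (r k) * (r k - r i) ^ 2 * (r k - w) ^ 2)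
      = 1 / (2 * (r i - w) ^ 2))
    (H4 : ∑ k ∈ Finset.univ.erase i,
        (lam n v u w (r k) - lam n v u w (r i)) /
          (iteratedDeriv 2 (lam n v u w) (r k) * (r k - r i) ^ 2 * (r k - w) ^ 4)
      = 5 / (2 * (r i - w) ^ 4)
        + 2 * deriv (lamPlus n v) w / (u * (r i - w) ^ 2)
        + 2 * (lamPlus n v w - lam n v u w (r i)) / (u * (r i - w) ^ 3)) :
    (1 / (3 * (iteratedDeriv 2 (lam n v u w) (r i)) ^ 2)) *
      (Qtwo n v u w (r i) - lam n v u w (r i) * Qone n v u w (r i)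
        + ∑ k ∈ Finset.univ.erase i,
            (Ptwo n v u w (r k) (r i) - lam n v u w (r i) * Pone n v u w (r k) (r i)) ^ 2 /
              (iteratedDeriv 2 (lam n v u w) (r k) *
                (lam n v u w (r k) - lam n v u w (r i))))
      = 1 / 24 := by
  have hb : r i - w ≠ 0 := sub_ne_zero.mpr (hw i)
  have hn : (n : ℂ) + 1 ≠ 0 := Nat.cast_add_one_ne_zero n
  have H0 : ∑ k ∈ univ.erase i, lamResidue n v u w 0 (r k) (r i) = (1 - n) / (2 * (n + 1)) := by
    simpa only [lamResidue, pow_zero, mul_one] using H1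
  change ∑ k ∈ univ.erase i, lamResidue n v u w 2 (r k) (r i) = _ at H2
  change ∑ k ∈ univ.erase i, lamResidue n v u w 4 (r k) (r i) = _ at H4
  rw [Qtwo_sub_lam_mul_Qone n v u (hw i), sum_sq_Ptwo_sub_lam_mul_Pone_div n v u _ r
    (fun k hk => hinj.ne (ne_of_mem_erase hk)) (fun k _ => hw k) (hw i), H0, H2, H4]
  calc
    _ = 1 / (3 * iteratedDeriv 2 (lam n v u w) (r i) ^ 2) *
        ((iteratedDeriv 2 (lamPlus n v) (r i) / 2 + u / (r i - w) ^ 3) ^ 2 / 2) := by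
      congr 1
      field_simp
      ring
    _ = 1 / (3 * iteratedDeriv 2 (lam n v u w) (r i) ^ 2) *
        (iteratedDeriv 2 (lam n v u w) (r i) ^ 2 / 8) := by
      rw [iteratedDeriv_two_lam n v u (hw i)]
      ring
    _ = 1 / 24 := by
      have hf := hsimple i
      field_simp
      norm_num
end
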